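/- (Krein's formula, matrix case) Suppose for every ξ ∈ (a,b] the truncated equations g(t,ξ) − ∫_a^ξ K(t,s)g(s,ξ)ds = I and g*(t,ξ) − ∫_a^ξ g*(s,ξ)K(s,t)ds = I have unique continuous solutions, and det[g*(ξ,ξ)g(ξ,ξ)] ≠ 0 for a ≤ ξ ≤ b. Set M'(ξ) = g*(ξ,ξ)g(ξ,ξ). Then for every continuous vector function f on [a,b], the unique solution φ of φ(t) − ∫_a^b K(t,s)φ(s) ds = f(t) is given by φ(t) = g(t,b)[M'(b)]⁻¹ [d/dξ ∫_a^ξ g*(s,ξ)f(s)ds]_{ξ=b} − ∫_t^b g(t,ξ) d/dξ { [M'(ξ)]⁻¹ d/dξ ∫_a^ξ g*(s,ξ)f(s)ds } dξ. -/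

import Mathlib

open Matrix intervalIntegral Set

attribute [local instance] Matrix.normedAddCommGroup Matrix.normedSpace

namespace KreinAux

open MeasureTheory Filter Topology

lemma inv_cont {F : Type*} [NormedAddCommGroup F] [NormedSpace ℂ F] [CompleteSpace F]
    (f : ℝ → F →L[ℂ] F) (hf : Continuous f) (ξ : ℝ) (hu : IsUnit (1 - f ξ)) :
    ContinuousAt (fun η => Ring.inverse (1 - f η)) ξ := by
  obtain ⟨u, hu⟩ := hu
  have h1 := NormedRing.inverse_continuousAt u
  rw [hu] at h1
  exact ContinuousAt.comp (f := fun η => 1 - f η) h1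
    (continuous_const.sub hf).continuousAt

/-- vectors -/
abbrev V (n : ℕ) := Fin n → ℂ

/-- continuous vector functions on `[a,b]` -/
abbrev E (n : ℕ) (a b : ℝ) := C(Icc a b, V n)

variable {n : ℕ} {a b : ℝ}

/-- evaluation with clamping -/
noncomputable def ev (h : a ≤ b) (v : E n a b) (s : ℝ) : V n := v (projIcc a b h s)

lemma ev_cont (h : a ≤ b) (v : E n a b) : Continuous (ev h v) :=
  v.continuous.comp continuous_projIcc

lemma ev_cont2 (h : a ≤ b) : Continuous (fun p : E n a b × ℝ => ev h p.1 p.2) := by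
  have : Continuous (fun p : E n a b × Icc a b => p.1 p.2) := ContinuousEval.continuous_eval
  exact this.comp (continuous_fst.prodMk ((continuous_projIcc (h := h)).comp continuous_snd))

lemma ev_norm (h : a ≤ b) (v : E n a b) (s : ℝ) : ‖ev h v s‖ ≤ ‖v‖ := v.norm_coe_le_norm _

/-- The truncated integral operator. -/
noncomputable def T (h : a ≤ b) (k : ℝ → V n →L[ℂ] E n a b) (hk : Continuous k) (C : ℝ)
    (hC : ∀ s, ‖k s‖ ≤ C) (η : ℝ) : E n a b →L[ℂ] E n a b :=
  LinearMap.mkContinuous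
    { toFun := fun v => ∫ s in a..η, k s (ev h v s)
      map_add' := fun v w => by
        rw [← intervalIntegral.integral_add]
        · simp [ev]
        · exact (hk.clm_apply (ev_cont h v)).intervalIntegrable _ _
        · exact (hk.clm_apply (ev_cont h w)).intervalIntegrable _ _
      map_smul' := fun c v => by
        simp [ev, ← intervalIntegral.integral_smul] }
    (C * |η - a|) (fun v => by
      have := intervalIntegral.norm_integral_le_of_norm_le_const (a := a) (b := η)
        (f := fun s => k s (ev h v s)) (C := C * ‖v‖) (fun s _ => by
          exact (le_trans ((k s).le_opNorm _) (mul_le_mul (hC s) (ev_norm h v s) (norm_nonneg _)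
            ((norm_nonneg (k s)).trans (hC s)))))
      simp only [LinearMap.coe_mk, AddHom.coe_mk]
      linarith)

variable (h : a ≤ b) (k : ℝ → V n →L[ℂ] E n a b) (hk : Continuous k) (C : ℝ)
    (hC : ∀ s, ‖k s‖ ≤ C)

lemma T_apply (η : ℝ) (v : E n a b) : T h k hk C hC η v = ∫ s in a..η, k s (ev h v s) := rfl

lemma T_sub (η ξ : ℝ) (v : E n a b) :
    T h k hk C hC η v - T h k hk C hC ξ v = ∫ s in ξ..η, k s (ev h v s) := by
  rw [T_apply, T_apply, intervalIntegral.integral_interval_sub_left]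
  · exact (hk.clm_apply (ev_cont h v)).intervalIntegrable _ _
  · exact (hk.clm_apply (ev_cont h v)).intervalIntegrable _ _

lemma T_cont : Continuous (T h k hk C hC) := by
  have hC0 : 0 ≤ C := (norm_nonneg (k 0)).trans (hC 0)
  suffices hL : LipschitzWith C.toNNReal (T h k hk C hC) from hL.continuous
  apply LipschitzWith.of_dist_le_mul
  intro η ξ
  rw [dist_eq_norm, Real.dist_eq]
  apply ContinuousLinearMap.opNorm_le_bound _ (by positivity)
  intro v
  rw [_root_.sub_apply, T_sub]
  have := intervalIntegral.norm_integral_le_of_norm_le_const (a := ξ) (b := η)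
        (f := fun s => k s (ev h v s)) (C := C * ‖v‖) (fun s _ => by
          exact (le_trans ((k s).le_opNorm _) (mul_le_mul (hC s) (ev_norm h v s) (norm_nonneg _)
            ((norm_nonneg (k s)).trans (hC s)))))
  rw [Real.coe_toNNReal _ hC0]
  linarith

lemma T_deriv (ξ : ℝ) (w : ℝ → E n a b) (hw : ContinuousAt w ξ) :
    HasDerivAt (fun η => T h k hk C hC η (w η) - T h k hk C hC ξ (w η)) (k ξ (ev h (w ξ) ξ)) ξ := by
  rw [hasDerivAt_iff_isLittleO, Asymptotics.isLittleO_iff]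
  intro ε hε
  have hm : ContinuousAt (fun p : ℝ × ℝ => k p.2 (ev h (w p.1) p.2)) (ξ, ξ) := by
    apply ContinuousAt.clm_apply
    · exact (hk.comp continuous_snd).continuousAt
    · have h1 : ContinuousAt (fun p : ℝ × ℝ => (w p.1, p.2)) (ξ, ξ) :=
        (ContinuousAt.comp (f := Prod.fst) (x := ((ξ, ξ) : ℝ × ℝ)) hw continuousAt_fst).prodMk
          continuousAt_snd
      exact ContinuousAt.comp (f := fun p : ℝ × ℝ => (w p.1, p.2))
        (ev_cont2 h).continuousAt h1
  rw [Metric.continuousAt_iff] at hm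
  obtain ⟨δ, hδ, hm⟩ := hm ε hε
  filter_upwards [Metric.ball_mem_nhds ξ hδ] with η hη
  rw [T_sub, sub_self, sub_zero]
  have h2 : (η - ξ) • k ξ (ev h (w ξ) ξ) = ∫ s in ξ..η, k ξ (ev h (w ξ) ξ) := by simp
  rw [h2, ← intervalIntegral.integral_sub
    ((hk.clm_apply (ev_cont h _)).intervalIntegrable _ _) (by simp)]
  apply intervalIntegral.norm_integral_le_of_norm_le_const
  intro s hs
  rw [← dist_eq_norm]
  apply le_of_lt
  apply hm (x := (η, s))
  rw [Prod.dist_eq, max_lt_iff]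
  refine ⟨hη, ?_⟩
  rw [Metric.mem_ball, Real.dist_eq] at hη
  rw [Real.dist_eq]
  refine lt_of_le_of_lt ?_ hη
  exact Set.abs_sub_left_of_mem_uIcc (uIoc_subset_uIcc hs)

lemma compact_aux {F : Type*} [NormedAddCommGroup F] [NormedSpace ℝ F] [CompleteSpace F]
    (S : Set F) (hS : IsCompact S) (a η : ℝ) (hη : a < η) : ∃ Q : Set F, IsCompact Q ∧
      ∀ f : ℝ → F, Continuous f → (∀ s ∈ Ioc a η, f s ∈ S) → (∫ s in a..η, f s) ∈ Q := by
  have hQ : IsCompact (closure (convexHull ℝ S)) :=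
    isCompact_iff_totallyBounded_isComplete.2
      ⟨hS.totallyBounded.convexHull.closure, isClosed_closure.isComplete⟩
  refine ⟨_, hQ.image (continuous_const_smul (η - a)), fun f hcont hf => ?_⟩
  refine ⟨⨍ s in Ioc a η, f s, ?_, ?_⟩
  · apply Convex.set_average_mem
    · exact (convex_convexHull ℝ S).closure
    · exact isClosed_closure
    · simp [hη]
    · simp
    · filter_upwards [ae_restrict_mem measurableSet_Ioc] with s hs
      exact subset_closure (subset_convexHull ℝ S (hf s hs))
    · exact (hcont.integrableOn_Icc).mono_set Ioc_subset_Icc_self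
  · have : (⨍ s in Ioc a η, f s) = ⨍ s in a..η, f s := by
      rw [uIoc_of_le hη.le]
    simp only [this, interval_average_eq]
    rw [smul_smul, mul_inv_cancel₀ (by linarith), one_smul]

lemma T_compact (η : ℝ) (hη : a < η) : IsCompactOperator (T h k hk C hC η) := by
  let S : Set (E n a b) := (fun p : ℝ × V n => k p.1 p.2) '' (Icc a η ×ˢ Metric.closedBall 0 1)
  have hS : IsCompact S := by
    apply (isCompact_Icc.prod (isCompact_closedBall _ _)).image
    exact (hk.comp continuous_fst).clm_apply continuous_snd
  obtain ⟨Q, hQ, hQ2⟩ := compact_aux S hS a η hη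
  rw [isCompactOperator_iff_exists_mem_nhds_image_subset_compact]
  refine ⟨Metric.closedBall 0 1, Metric.closedBall_mem_nhds _ one_pos, Q, hQ, ?_⟩
  rintro _ ⟨v, hv, rfl⟩
  rw [T_apply]
  apply hQ2 _ (hk.clm_apply (ev_cont h v))
  intro s hs
  refine ⟨(s, ev h v s), ⟨Ioc_subset_Icc_self hs, ?_⟩, rfl⟩
  rw [mem_closedBall_zero_iff] at hv ⊢
  exact (ev_norm h v s).trans hv

lemma T_unit (η : ℝ) (hη : a < η) (hinj : ∀ v, T h k hk C hC η v = v → v = 0) :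
    IsUnit (1 - T h k hk C hC η) := by
  rcases (T_compact h k hk C hC η hη).hasEigenvalue_or_mem_resolventSet
    (one_ne_zero : (1 : ℂ) ≠ 0) with h1 | h1
  · obtain ⟨v, hv⟩ := h1.exists_hasEigenvector
    exact absurd (hinj v (by simpa using hv.apply_eq_smul)) hv.2
  · simpa [spectrum.mem_resolventSet_iff] using h1

/-- resolvent -/
noncomputable def R (η : ℝ) : E n a b →L[ℂ] E n a b := Ring.inverse (1 - T h k hk C hC η)

lemma R_cont (ξ : ℝ) (hu : IsUnit (1 - T h k hk C hC ξ)) : ContinuousAt (R h k hk C hC) ξ :=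
  inv_cont _ (T_cont h k hk C hC) ξ hu

lemma R_right (ξ : ℝ) (hu : IsUnit (1 - T h k hk C hC ξ)) (y : E n a b) :
    R h k hk C hC ξ y - T h k hk C hC ξ (R h k hk C hC ξ y) = y := by
  have := Ring.mul_inverse_cancel _ hu
  have := congrArg (fun A : E n a b →L[ℂ] E n a b => A y) this
  simpa [R] using this

lemma R_left (ξ : ℝ) (hu : IsUnit (1 - T h k hk C hC ξ)) (y : E n a b) :
    R h k hk C hC ξ (y - T h k hk C hC ξ y) = y := by
  have := Ring.inverse_mul_cancel _ hu
  have := congrArg (fun A : E n a b →L[ℂ] E n a b => A y) this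
  simpa [R] using this

lemma R_deriv (ξ : ℝ) (hu : ∀ᶠ η in 𝓝 ξ, IsUnit (1 - T h k hk C hC η)) (y : ℝ → E n a b)
    (y' : E n a b) (hy : HasDerivAt y y' ξ) :
    HasDerivAt (fun η => R h k hk C hC η (y η))
      (R h k hk C hC ξ (k ξ (ev h (R h k hk C hC ξ (y ξ)) ξ) + y')) ξ := by
  have hw : ContinuousAt (fun η => R h k hk C hC η (y η)) ξ :=
    (R_cont h k hk C hC ξ hu.self_of_nhds).clm_apply hy.continuousAt
  have h1 := (T_deriv h k hk C hC ξ _ hw).add hy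
  have h2 := ((R h k hk C hC ξ).restrictScalars ℝ).hasFDerivAt.comp_hasDerivAt ξ h1
  refine HasDerivAt.congr_of_eventuallyEq h2 ?_
  filter_upwards [hu] with η hη
  have h3 := R_right h k hk C hC η hη (y η)
  have h4 := R_left h k hk C hC ξ hu.self_of_nhds (R h k hk C hC η (y η))
  conv_lhs => rw [← h4]
  simp only [Function.comp, ContinuousLinearMap.coe_restrictScalars', Pi.add_apply]
  congr 1
  have h5 : y η = R h k hk C hC η (y η) - T h k hk C hC η (R h k hk C hC η (y η)) := h3.symm
  generalize R h k hk C hC η (y η) = z at *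
  rw [h5]
  abel

end KreinAux

namespace KreinAux

open MeasureTheory Filter Topology

variable {n : ℕ} {a b : ℝ}

/-- The kernel as an operator-valued function. -/
noncomputable def kE (h : a ≤ b) (K : ℝ → ℝ → Matrix (Fin n) (Fin n) ℂ)
    (hK : Continuous fun p : ℝ × ℝ => K p.1 p.2) (s : ℝ) : V n →L[ℂ] E n a b :=
  LinearMap.toContinuousLinearMap
    { toFun := fun x => ⟨fun t => K t (projIcc a b h s) *ᵥ x, by
        apply Continuous.matrix_mulVec _ continuous_const
        exact hK.comp (continuous_subtype_val.prodMk continuous_const)⟩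
      map_add' := fun x y => by ext t : 1; simp [Matrix.mulVec_add]
      map_smul' := fun c x => by ext t : 1; simp [Matrix.mulVec_smul] }

lemma kE_apply (h : a ≤ b) (K : ℝ → ℝ → Matrix (Fin n) (Fin n) ℂ)
    (hK : Continuous fun p : ℝ × ℝ => K p.1 p.2) (s : ℝ) (x : V n) (t : Icc a b) :
    kE h K hK s x t = K t (projIcc a b h s) *ᵥ x := rfl

lemma kE_cont (h : a ≤ b) (K : ℝ → ℝ → Matrix (Fin n) (Fin n) ℂ)
    (hK : Continuous fun p : ℝ × ℝ => K p.1 p.2) : Continuous (kE h K hK) := by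
  rw [continuous_clm_apply]
  intro x
  let F : C(ℝ × Icc a b, V n) := ⟨fun p => K p.2 (projIcc a b h p.1) *ᵥ x, by
        apply Continuous.matrix_mulVec _ continuous_const
        exact hK.comp ((continuous_subtype_val.comp continuous_snd).prodMk
          (continuous_subtype_val.comp ((continuous_projIcc (h := h)).comp continuous_fst)))⟩
  exact F.curry.continuous

lemma kE_bound (h : a ≤ b) (K : ℝ → ℝ → Matrix (Fin n) (Fin n) ℂ)
    (hK : Continuous fun p : ℝ × ℝ => K p.1 p.2) : ∃ C, ∀ s, ‖kE h K hK s‖ ≤ C := by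
  obtain ⟨C, hC⟩ := (isCompact_Icc (a := a) (b := b)).exists_bound_of_continuousOn
    (f := kE h K hK) (kE_cont h K hK).continuousOn
  refine ⟨C, fun s => ?_⟩
  have : kE h K hK s = kE h K hK (projIcc a b h s) := by
    ext x t : 2
    simp [kE_apply]
  rw [this]
  exact hC _ (projIcc a b h s).2

/-- constants -/
noncomputable def cE : V n →L[ℂ] E n a b :=
  LinearMap.toContinuousLinearMap
    { toFun := fun x => ContinuousMap.const _ x
      map_add' := fun x y => by ext t : 1; simp
      map_smul' := fun c x => by ext t : 1; simp }

lemma cE_apply (x : V n) (t : Icc a b) : (cE x : E n a b) t = x := rfl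

lemma T_eval (h : a ≤ b) (k : ℝ → V n →L[ℂ] E n a b) (hk : Continuous k) (C : ℝ)
    (hC : ∀ s, ‖k s‖ ≤ C) (η : ℝ) (v : E n a b) (t : Icc a b) :
    T h k hk C hC η v t = ∫ s in a..η, k s (ev h v s) t := by
  rw [T_apply]
  have hi : IntervalIntegrable (fun s => k s (ev h v s)) volume a η :=
    (hk.clm_apply (ev_cont h v)).intervalIntegrable a η
  exact ((ContinuousMap.evalCLM ℂ t).intervalIntegral_comp_comm hi).symm

lemma ev_of_mem (h : a ≤ b) (v : E n a b) {s : ℝ} (hs : s ∈ Icc a b) : ev h v s = v ⟨s, hs⟩ := by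
  rw [ev, projIcc_of_mem h hs]

lemma T_kE (h : a ≤ b) (K : ℝ → ℝ → Matrix (Fin n) (Fin n) ℂ)
    (hK : Continuous fun p : ℝ × ℝ => K p.1 p.2) (C : ℝ)
    (hC : ∀ s, ‖kE h K hK s‖ ≤ C) (η : ℝ) (hη : η ∈ Icc a b) (v : E n a b) (t : ℝ)
    (ht : t ∈ Icc a b) :
    ev h (T h _ (kE_cont h K hK) C hC η v) t = ∫ s in a..η, K t s *ᵥ ev h v s := by
  rw [ev_of_mem h _ ht, T_eval]
  apply intervalIntegral.integral_congr
  intro s hs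
  rw [uIcc_of_le hη.1] at hs
  simp only [kE_apply]
  rw [projIcc_of_mem h ⟨hs.1, hs.2.trans hη.2⟩]

/-- matrix times vector, as a continuous linear map in the vector -/
noncomputable def mv (A : Matrix (Fin n) (Fin n) ℂ) : V n →L[ℂ] V n :=
  LinearMap.toContinuousLinearMap A.mulVecLin

/-- matrix times vector, as a continuous linear map in the matrix -/
noncomputable def vm (x : V n) : Matrix (Fin n) (Fin n) ℂ →L[ℂ] V n :=
  LinearMap.toContinuousLinearMap
    { toFun := fun A => A *ᵥ x
      map_add' := fun A B => Matrix.add_mulVec A B x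
      map_smul' := fun c A => Matrix.smul_mulVec c A x }

/-- matrix with all columns equal -/
noncomputable def col : V n →L[ℂ] Matrix (Fin n) (Fin n) ℂ :=
  LinearMap.toContinuousLinearMap
    { toFun := fun x => Matrix.of fun i _ => x i
      map_add' := fun A B => by ext; simp
      map_smul' := fun c A => by ext; simp }

lemma mul_col (A : Matrix (Fin n) (Fin n) ℂ) (x : V n) : A * col x = col (A *ᵥ x) := by
  ext i j
  simp [col, Matrix.mul_apply, Matrix.mulVec, dotProduct]

lemma integral_mulVec_left (A : Matrix (Fin n) (Fin n) ℂ) (u : ℝ → V n) (hu : Continuous u)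
    (c d : ℝ) : A *ᵥ (∫ s in c..d, u s) = ∫ s in c..d, A *ᵥ u s :=
  ((mv A).intervalIntegral_comp_comm (hu.intervalIntegrable c d)).symm

lemma integral_mulVec_right (A : ℝ → Matrix (Fin n) (Fin n) ℂ) (x : V n) (hA : Continuous A)
    (c d : ℝ) : (∫ s in c..d, A s) *ᵥ x = ∫ s in c..d, A s *ᵥ x :=
  ((vm x).intervalIntegral_comp_comm (hA.intervalIntegrable c d)).symm

lemma uniq_vec (K : ℝ → ℝ → Matrix (Fin n) (Fin n) ℂ)
    (hK : Continuous fun p : ℝ × ℝ => K p.1 p.2) (g : ℝ → Matrix (Fin n) (Fin n) ℂ)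
    (hgc : Continuous g) (ξ : ℝ)
    (hg : ∀ t ∈ Icc a ξ, g t - ∫ s in a..ξ, K t s * g s = 1)
    (hguniq : ∀ h : ℝ → Matrix (Fin n) (Fin n) ℂ,
      ContinuousOn h (Icc a ξ) →
      (∀ t ∈ Icc a ξ, h t - ∫ s in a..ξ, K t s * h s = 1) →
      ∀ t ∈ Icc a ξ, h t = g t)
    (v : ℝ → V n) (hv : Continuous v)
    (hvK : ∀ t ∈ Icc a ξ, v t = ∫ s in a..ξ, K t s *ᵥ v s) : ∀ t ∈ Icc a ξ, v t = 0 := by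
  intro t ht
  have hcv : Continuous (fun t => col (v t)) := col.continuous.comp hv
  have h1 := hguniq (fun t => g t + col (v t)) (hgc.add hcv).continuousOn ?_ t ht
  · have h2 : col (v t) = 0 := by simpa using h1
    ext i
    exact congrFun (congrFun h2 i) i
  · intro t ht
    have hKt : Continuous (K t) := hK.comp (continuous_const.prodMk continuous_id)
    have e1 : (∫ s in a..ξ, K t s * (g s + col (v s)))
        = (∫ s in a..ξ, K t s * g s) + ∫ s in a..ξ, col (K t s *ᵥ v s) := by
      rw [← intervalIntegral.integral_add]
      · simp only [mul_add, mul_col]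
      · exact (hKt.matrix_mul hgc).intervalIntegrable _ _
      · exact (col.continuous.comp (hKt.matrix_mulVec hv)).intervalIntegrable _ _
    have e2 : (∫ s in a..ξ, col (K t s *ᵥ v s)) = col (v t) := by
      rw [hvK t ht]
      exact col.intervalIntegral_comp_comm ((hKt.matrix_mulVec hv).intervalIntegrable _ _)
    rw [e1, e2, ← hg t ht]
    abel

lemma duality (K : ℝ → ℝ → Matrix (Fin n) (Fin n) ℂ)
    (hK : Continuous fun p : ℝ × ℝ => K p.1 p.2) (gs : ℝ → Matrix (Fin n) (Fin n) ℂ)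
    (hgc : Continuous gs) (ξ : ℝ) (hξ : a ≤ ξ)
    (hgs : ∀ t ∈ Icc a ξ, gs t - ∫ s in a..ξ, gs s * K s t = 1)
    (u : ℝ → V n) (hu : Continuous u) :
    ∫ t in a..ξ, gs t *ᵥ (u t - ∫ s in a..ξ, K t s *ᵥ u s) = ∫ t in a..ξ, u t := by
  have hF : Continuous (fun p : ℝ × ℝ => gs p.1 *ᵥ (K p.1 p.2 *ᵥ u p.2)) :=
    (hgc.comp continuous_fst).matrix_mulVec (hK.matrix_mulVec (hu.comp continuous_snd))
  have hin : ∀ t, gs t *ᵥ (∫ s in a..ξ, K t s *ᵥ u s)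
      = ∫ s in a..ξ, gs t *ᵥ (K t s *ᵥ u s) := by
    intro t
    have hKt : Continuous (K t) := hK.comp (continuous_const.prodMk continuous_id)
    exact integral_mulVec_left _ _ (hKt.matrix_mulVec hu) _ _
  have hin2 : Continuous (fun t => ∫ s in a..ξ, gs t *ᵥ (K t s *ᵥ u s)) :=
    intervalIntegral.continuous_parametric_intervalIntegral_of_continuous' hF a ξ
  simp only [Matrix.mulVec_sub, hin]
  rw [intervalIntegral.integral_sub ((hgc.matrix_mulVec hu).intervalIntegrable _ _)
    (hin2.intervalIntegrable _ _)]
  rw [intervalIntegral_intervalIntegral_swap]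
  · have hin3 : Continuous (fun s => ∫ t in a..ξ, gs t *ᵥ (K t s *ᵥ u s)) :=
      intervalIntegral.continuous_parametric_intervalIntegral_of_continuous'
        (f := fun s t => gs t *ᵥ (K t s *ᵥ u s)) (hF.comp continuous_swap) a ξ
    rw [← intervalIntegral.integral_sub ((hgc.matrix_mulVec hu).intervalIntegrable _ _)
      (hin3.intervalIntegrable _ _)]
    apply intervalIntegral.integral_congr
    intro s hs
    rw [uIcc_of_le hξ] at hs
    have hKs : Continuous (fun t => K t s) := hK.comp (continuous_id.prodMk continuous_const)
    have e := integral_mulVec_right (fun t => gs t * K t s) (u s) (hgc.matrix_mul hKs) a ξ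
    simp only [← Matrix.mulVec_mulVec] at e
    simp only
    rw [← e, ← Matrix.sub_mulVec, hgs s hs, Matrix.one_mulVec]
  · have : IntegrableOn (Function.uncurry fun t s => gs t *ᵥ (K t s *ᵥ u s))
        (uIcc a ξ ×ˢ uIcc a ξ) :=
      hF.continuousOn.integrableOn_compact (isCompact_uIcc.prod isCompact_uIcc)
    exact this.mono_set (prod_mono uIoc_subset_uIcc uIoc_subset_uIcc)

end KreinAux

/-- Krein's formula, matrix case, Theorem 3.1:
if the truncated equations have unique continuous solutions g, g* with
det[g*(ξ,ξ)g(ξ,ξ)] ≠ 0, then the unique solution φ of the full system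
φ(t) − ∫_a^b K(t,s)φ(s) ds = f(t) is given by
φ(t) = g(t,b)[M'(b)]⁻¹ D(b) − ∫_t^b g(t,ξ) (d/dξ)[(M'(ξ))⁻¹ D(ξ)] dξ,
where M'(ξ) = g*(ξ,ξ)g(ξ,ξ) and D(ξ) = d/dξ ∫_a^ξ g*(s,ξ)f(s) ds. -/
theorem krein_formula (n : ℕ) (a b : ℝ) (hab : a < b)
    (K : ℝ → ℝ → Matrix (Fin n) (Fin n) ℂ)
    (hK : Continuous fun p : ℝ × ℝ => K p.1 p.2)
    (f : ℝ → Fin n → ℂ) (hf : Continuous f)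
    (g gs : ℝ → ℝ → Matrix (Fin n) (Fin n) ℂ)
    -- g and g* solve the truncated equations with identity right-hand side
    (hgcont : Continuous fun p : ℝ × ℝ => g p.1 p.2)
    (hgscont : Continuous fun p : ℝ × ℝ => gs p.1 p.2)
    (hg : ∀ ξ ∈ Ioc a b, ∀ t ∈ Icc a ξ,
      g t ξ - ∫ s in a..ξ, K t s * g s ξ = 1)
    (hgs : ∀ ξ ∈ Ioc a b, ∀ t ∈ Icc a ξ,
      gs t ξ - ∫ s in a..ξ, gs s ξ * K s t = 1)
    -- uniqueness of the truncated solutions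
    (hguniq : ∀ ξ ∈ Ioc a b, ∀ h : ℝ → Matrix (Fin n) (Fin n) ℂ,
      ContinuousOn h (Icc a ξ) →
      (∀ t ∈ Icc a ξ, h t - ∫ s in a..ξ, K t s * h s = 1) →
      ∀ t ∈ Icc a ξ, h t = g t ξ)
    (hgsuniq : ∀ ξ ∈ Ioc a b, ∀ h : ℝ → Matrix (Fin n) (Fin n) ℂ,
      ContinuousOn h (Icc a ξ) →
      (∀ t ∈ Icc a ξ, h t - ∫ s in a..ξ, h s * K s t = 1) →
      ∀ t ∈ Icc a ξ, h t = gs t ξ)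
    -- the nondegeneracy condition det[g*(ξ,ξ)g(ξ,ξ)] ≠ 0
    (hdet : ∀ ξ ∈ Icc a b, (gs ξ ξ * g ξ ξ).det ≠ 0)
    -- D ξ = d/dξ ∫_a^ξ g*(s,ξ) f(s) ds
    (D : ℝ → Fin n → ℂ) (hDcont : Continuous D)
    (hD : ∀ ξ ∈ Icc a b,
      HasDerivAt (fun η => ∫ s in a..η, gs s η *ᵥ f s) (D ξ) ξ)
    -- F' ξ = d/dξ [ (M'(ξ))⁻¹ D ξ ]
    (F' : ℝ → Fin n → ℂ) (hF'cont : Continuous F')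
    (hF' : ∀ ξ ∈ Icc a b,
      HasDerivAt (fun η => (gs η η * g η η)⁻¹ *ᵥ D η) (F' ξ) ξ)
    -- φ is the solution of the full system
    (φ : ℝ → Fin n → ℂ) (hφcont : Continuous φ)
    (hφ : ∀ t ∈ Icc a b, φ t - ∫ s in a..b, K t s *ᵥ φ s = f t) :
    ∀ t ∈ Icc a b,
      φ t = g t b *ᵥ ((gs b b * g b b)⁻¹ *ᵥ D b)
        - ∫ ξ in t..b, g t ξ *ᵥ F' ξ := by
  
  have h : a ≤ b := hab.le
  obtain ⟨C, hC⟩ := KreinAux.kE_bound h K hK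
  let T := KreinAux.T h _ (KreinAux.kE_cont h K hK) C hC
  let R := KreinAux.R h _ (KreinAux.kE_cont h K hK) C hC
  have hgx : ∀ ξ, Continuous fun t => g t ξ := fun ξ =>
    hgcont.comp (continuous_id.prodMk continuous_const)
  have hgsx : ∀ ξ, Continuous fun t => gs t ξ := fun ξ =>
    hgscont.comp (continuous_id.prodMk continuous_const)
  have hevT : ∀ η ∈ Icc a b, ∀ v : KreinAux.E n a b, ∀ t ∈ Icc a b,
      KreinAux.ev h (T η v) t = ∫ s in a..η, K t s *ᵥ KreinAux.ev h v s :=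
    fun η hη v t ht => KreinAux.T_kE h K hK C hC η hη v t ht
  have hevsub : ∀ (v w : KreinAux.E n a b) (t : ℝ),
      KreinAux.ev h (v - w) t = KreinAux.ev h v t - KreinAux.ev h w t := fun v w t => rfl
  -- vector uniqueness
  have huniq : ∀ ξ ∈ Ioc a b, ∀ v : ℝ → Fin n → ℂ, Continuous v →
      (∀ t ∈ Icc a ξ, v t = ∫ s in a..ξ, K t s *ᵥ v s) → ∀ t ∈ Icc a ξ, v t = 0 :=
    fun ξ hξ v hv hvK => KreinAux.uniq_vec K hK (fun t => g t ξ) (hgx ξ) ξ (hg ξ hξ)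
      (hguniq ξ hξ) v hv hvK
  -- units
  have hunit : ∀ ξ ∈ Ioc a b, IsUnit (1 - T ξ) := by
    intro ξ hξ
    apply KreinAux.T_unit _ _ _ _ _ _ hξ.1
    intro v hv
    have hξ' : ξ ∈ Icc a b := Ioc_subset_Icc_self hξ
    have h1 : ∀ t ∈ Icc a b, KreinAux.ev h v t = ∫ s in a..ξ, K t s *ᵥ KreinAux.ev h v s := by
      intro t ht
      conv_lhs => rw [← hv]
      exact hevT ξ hξ' v t ht
    have h2 := huniq ξ hξ _ (KreinAux.ev_cont h v)
      (fun t ht => h1 t ⟨ht.1, ht.2.trans hξ.2⟩)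
    ext t : 1
    have h3 : v t = KreinAux.ev h v t := by
      rw [KreinAux.ev_of_mem h v t.2]
    rw [h3, h1 t t.2]
    have h4 : (∫ s in a..ξ, K t s *ᵥ KreinAux.ev h v s) = ∫ s in a..ξ, (0 : Fin n → ℂ) := by
      apply intervalIntegral.integral_congr
      intro s hs
      rw [uIcc_of_le hξ'.1] at hs
      simp only [h2 s hs, Matrix.mulVec_zero]
    rw [h4]
    simp
  have hunitev : ∀ ξ ∈ Ioo a b, ∀ᶠ η in nhds ξ, IsUnit (1 - T η) := by
    intro ξ hξ
    filter_upwards [Ioo_mem_nhds hξ.1 hξ.2] with η hη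
    exact hunit η (Ioo_subset_Ioc_self hη)
  have hRright : ∀ ξ ∈ Ioc a b, ∀ y, R ξ y - T ξ (R ξ y) = y :=
    fun ξ hξ y => KreinAux.R_right _ _ _ _ _ ξ (hunit ξ hξ) y
  -- the equation satisfied by R
  have hReq : ∀ ξ ∈ Ioc a b, ∀ y, ∀ t ∈ Icc a b,
      KreinAux.ev h (R ξ y) t - (∫ s in a..ξ, K t s *ᵥ KreinAux.ev h (R ξ y) s)
        = KreinAux.ev h y t := by
    intro ξ hξ y t ht
    rw [← hevT ξ (Ioc_subset_Icc_self hξ) _ t ht, ← hevsub, hRright ξ hξ]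
  -- R on constants is g
  have hRg : ∀ ξ ∈ Ioc a b, ∀ x : Fin n → ℂ, ∀ t ∈ Icc a ξ,
      KreinAux.ev h (R ξ (KreinAux.cE x)) t = g t ξ *ᵥ x := by
    intro ξ hξ x t ht
    have hgxc : Continuous fun t => g t ξ *ᵥ x := (hgx ξ).matrix_mulVec continuous_const
    have hec := KreinAux.ev_cont h (R ξ (KreinAux.cE x))
    rw [← sub_eq_zero]
    refine huniq ξ hξ (fun t => KreinAux.ev h (R ξ (KreinAux.cE x)) t - g t ξ *ᵥ x)
      (hec.sub hgxc) ?_ t ht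
    intro t ht
    have hKt : Continuous (K t) := hK.comp (continuous_const.prodMk continuous_id)
    have e1 := hReq ξ hξ (KreinAux.cE x) t ⟨ht.1, ht.2.trans hξ.2⟩
    have e2 : g t ξ *ᵥ x - (∫ s in a..ξ, K t s *ᵥ (g s ξ *ᵥ x)) = x := by
      have := congrArg (fun A => A *ᵥ x) (hg ξ hξ t ht)
      simp only [Matrix.sub_mulVec, Matrix.one_mulVec] at this
      rw [KreinAux.integral_mulVec_right _ _ (hKt.matrix_mul (hgx ξ))] at this
      simpa only [Matrix.mulVec_mulVec] using this
    have e3 : KreinAux.ev h (KreinAux.cE x : KreinAux.E n a b) t = x := rfl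
    rw [e3] at e1
    simp only [Matrix.mulVec_sub]
    rw [intervalIntegral.integral_sub ((hKt.matrix_mulVec hec).intervalIntegrable _ _)
      ((hKt.matrix_mulVec hgxc).intervalIntegrable _ _)]
    have e4 := e1.trans e2.symm
    rw [sub_eq_sub_iff_sub_eq_sub] at e4
    exact e4
  -- the data
  let fE : KreinAux.E n a b := ⟨fun t => f t, hf.comp continuous_subtype_val⟩
  have hfE : ∀ t ∈ Icc a b, KreinAux.ev h fE t = f t := by
    intro t ht
    rw [KreinAux.ev_of_mem h _ ht]
    rfl
  -- D
  have hDval : ∀ ξ ∈ Ioo a b, D ξ = gs ξ ξ *ᵥ KreinAux.ev h (R ξ fE) ξ := by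
    intro ξ hξ
    have hξ1 : ξ ∈ Ioc a b := Ioo_subset_Ioc_self hξ
    have hξ2 : ξ ∈ Icc a b := Ioo_subset_Icc_self hξ
    have hd := KreinAux.R_deriv h _ (KreinAux.kE_cont h K hK) C hC ξ (hunitev ξ hξ)
      (fun _ => fE) 0 (hasDerivAt_const ξ fE)
    rw [add_zero] at hd
    change HasDerivAt (fun η => R η fE) (R ξ (KreinAux.kE h K hK ξ (KreinAux.ev h (R ξ fE) ξ))) ξ
      at hd
    set x := KreinAux.ev h (R ξ fE) ξ with hx
    set w := R ξ (KreinAux.kE h K hK ξ x) with hw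
    have hcc : Continuous (fun _ : ℝ => (KreinAux.cE : (Fin n → ℂ) →L[ℂ] KreinAux.E n a b)) :=
      continuous_const
    let J := KreinAux.T h _ hcc ‖(KreinAux.cE : (Fin n → ℂ) →L[ℂ] KreinAux.E n a b)‖
      (fun _ => le_rfl)
    have hJ : ∀ η v, KreinAux.ev h (J η v) ξ = ∫ s in a..η, KreinAux.ev h v s := by
      intro η v
      rw [KreinAux.ev_of_mem h _ hξ2, KreinAux.T_eval]
      rfl
    have hd1 : HasDerivAt (fun η => J η (R η fE) - J ξ (R η fE)) (KreinAux.cE x) ξ :=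
      KreinAux.T_deriv h _ hcc _ _ ξ (fun η => R η fE) hd.continuousAt
    have hd2 : HasDerivAt (fun η => J ξ (R η fE)) (J ξ w) ξ :=
      ((J ξ).restrictScalars ℝ).hasFDerivAt.comp_hasDerivAt ξ hd
    have hd3 := hd1.add hd2
    have hd4 : HasDerivAt (fun η => KreinAux.ev h (J η (R η fE)) ξ)
        (x + KreinAux.ev h (J ξ w) ξ) ξ := by
      have := ((ContinuousMap.evalCLM ℂ (M := Fin n → ℂ)
        (projIcc a b h ξ)).restrictScalars ℝ).hasFDerivAt.comp_hasDerivAt ξ hd3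
      refine this.congr_of_eventuallyEq (Filter.Eventually.of_forall fun η => ?_)
      change _ = KreinAux.ev h ((J η (R η fE) - J ξ (R η fE)) + J ξ (R η fE)) ξ
      rw [sub_add_cancel]
    simp only [hJ] at hd4
    have hd5 := (hD ξ hξ2).congr_of_eventuallyEq 
      (f₁ := fun η => ∫ s in a..η, KreinAux.ev h (R η fE) s) ?_
    · rw [hd5.unique hd4, ← KreinAux.duality K hK (fun t => gs t ξ) (hgsx ξ) ξ hξ.1.le
        (hgs ξ hξ1) _ (KreinAux.ev_cont h w)]
      have e1 : (∫ t in a..ξ, gs t ξ *ᵥ (KreinAux.ev h w t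
          - ∫ s in a..ξ, K t s *ᵥ KreinAux.ev h w s))
          = ∫ t in a..ξ, (gs t ξ * K t ξ) *ᵥ x := by
        apply intervalIntegral.integral_congr
        intro t ht
        rw [uIcc_of_le hξ.1.le] at ht
        have ht' : t ∈ Icc a b := ⟨ht.1, ht.2.trans hξ.2.le⟩
        simp only
        rw [hw, hReq ξ hξ1 _ t ht', KreinAux.ev_of_mem h _ ht', KreinAux.kE_apply,
          projIcc_of_mem h hξ2, Matrix.mulVec_mulVec]
      have hKs : Continuous (fun t => K t ξ) := hK.comp (continuous_id.prodMk continuous_const)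
      rw [e1, ← KreinAux.integral_mulVec_right _ _ ((hgsx ξ).matrix_mul hKs)]
      have e2 := hgs ξ hξ1 ξ ⟨hξ.1.le, le_rfl⟩
      rw [sub_eq_iff_eq_add] at e2
      rw [e2, Matrix.add_mulVec, Matrix.one_mulVec]
    · filter_upwards [Ioo_mem_nhds hξ.1 hξ.2] with η hη
      have hη1 : η ∈ Ioc a b := Ioo_subset_Ioc_self hη
      rw [← KreinAux.duality K hK (fun t => gs t η) (hgsx η) η hη.1.le
        (hgs η hη1) _ (KreinAux.ev_cont h _)]
      apply intervalIntegral.integral_congr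
      intro t ht
      rw [uIcc_of_le hη.1.le] at ht
      have ht' : t ∈ Icc a b := ⟨ht.1, ht.2.trans hη.2.le⟩
      simp only
      rw [hReq η hη1 _ t ht', hfE t ht']
  let c : ℝ → Fin n → ℂ := fun η => (gs η η * g η η)⁻¹ *ᵥ D η
  have hgc : ∀ ξ ∈ Ioo a b, g ξ ξ *ᵥ c ξ = KreinAux.ev h (R ξ fE) ξ := by
    intro ξ hξ
    have hu := hdet ξ (Ioo_subset_Icc_self hξ)
    rw [Matrix.det_mul] at hu
    have hu1 : IsUnit (gs ξ ξ).det := (left_ne_zero_of_mul hu).isUnit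
    have hu2 : IsUnit (g ξ ξ).det := (right_ne_zero_of_mul hu).isUnit
    simp only [c]
    rw [hDval ξ hξ, Matrix.mul_inv_rev, Matrix.mulVec_mulVec, Matrix.mulVec_mulVec,
      ← Matrix.mul_assoc, Matrix.mul_nonsing_inv _ hu2, Matrix.one_mul,
      Matrix.nonsing_inv_mul _ hu1, Matrix.one_mulVec]
  -- q
  let q : ℝ → KreinAux.E n a b := fun η => R η (fE - KreinAux.cE (c η))
  have hqev : ∀ ξ ∈ Ioc a b, ∀ t ∈ Icc a ξ,
      KreinAux.ev h (q ξ) t = KreinAux.ev h (R ξ fE) t - g t ξ *ᵥ c ξ := by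
    intro ξ hξ t ht
    simp only [q]
    rw [map_sub, hevsub, hRg ξ hξ _ t ht]
  have hq0 : ∀ ξ ∈ Ioo a b, KreinAux.ev h (q ξ) ξ = 0 := by
    intro ξ hξ
    rw [hqev ξ (Ioo_subset_Ioc_self hξ) ξ ⟨hξ.1.le, le_rfl⟩, hgc ξ hξ, sub_self]
  have hyd : ∀ ξ ∈ Icc a b,
      HasDerivAt (fun η => fE - (KreinAux.cE (c η) : KreinAux.E n a b))
        (-(KreinAux.cE (F' ξ))) ξ := by
    intro ξ hξ
    exact (((KreinAux.cE (a := a) (b := b)).restrictScalars ℝ).hasFDerivAt.comp_hasDerivAt ξ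
      (hF' ξ hξ)).const_sub fE
  have hqd : ∀ ξ ∈ Ioo a b, HasDerivAt q (-(R ξ (KreinAux.cE (F' ξ)))) ξ := by
    intro ξ hξ
    have := KreinAux.R_deriv h _ (KreinAux.kE_cont h K hK) C hC ξ (hunitev ξ hξ)
      _ _ (hyd ξ (Ioo_subset_Icc_self hξ))
    change HasDerivAt q (R ξ (KreinAux.kE h K hK ξ (KreinAux.ev h (q ξ) ξ) + _)) ξ at this
    rw [hq0 ξ hξ, map_zero, zero_add, map_neg] at this
    exact this
  have hqc : ∀ ξ ∈ Ioc a b, ContinuousAt q ξ := by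
    intro ξ hξ
    exact (KreinAux.R_cont h _ (KreinAux.kE_cont h K hK) C hC ξ (hunit ξ hξ)).clm_apply
      (hyd ξ (Ioc_subset_Icc_self hξ)).continuousAt
  -- the solution
  have hφE : ∀ t ∈ Icc a b, KreinAux.ev h (R b fE) t = φ t := by
    intro t ht
    have hb : b ∈ Ioc a b := ⟨hab, le_rfl⟩
    rw [← sub_eq_zero]
    have hec := KreinAux.ev_cont h (R b fE)
    refine huniq b hb (fun t => KreinAux.ev h (R b fE) t - φ t) (hec.sub hφcont) ?_ t ht
    intro t ht
    have hKt : Continuous (K t) := hK.comp (continuous_const.prodMk continuous_id)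
    simp only [Matrix.mulVec_sub]
    rw [intervalIntegral.integral_sub ((hKt.matrix_mulVec hec).intervalIntegrable _ _)
      ((hKt.matrix_mulVec hφcont).intervalIntegrable _ _)]
    have e4 := ((hReq b hb fE t ht).trans (hfE t ht)).trans (hφ t ht).symm
    rw [sub_eq_sub_iff_sub_eq_sub] at e4
    exact e4
  have hmain : ∀ t ∈ Ioo a b, φ t = g t b *ᵥ ((gs b b * g b b)⁻¹ *ᵥ D b)
        - ∫ ξ in t..b, g t ξ *ᵥ F' ξ := by
    intro t ht
    have hgt : Continuous (fun ξ => g t ξ *ᵥ F' ξ) :=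
      (hgcont.comp (continuous_const.prodMk continuous_id)).matrix_mulVec hF'cont
    have e := intervalIntegral.integral_eq_sub_of_hasDerivAt_of_le ht.2.le
      (f := fun ξ => KreinAux.ev h (q ξ) t) (f' := fun ξ => -(g t ξ *ᵥ F' ξ)) ?_ ?_
      (hgt.neg.intervalIntegrable _ _)
    · rw [intervalIntegral.integral_neg, hq0 t ht, sub_zero,
        hqev b ⟨hab, le_rfl⟩ t (Ioo_subset_Icc_self ht), hφE t (Ioo_subset_Icc_self ht)] at e
      rw [sub_eq_add_neg, e]
      simp only [c]
      abel
    · intro ξ hξ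
      have := (hqc ξ ⟨ht.1.trans_le hξ.1, hξ.2⟩)
      exact (((ContinuousMap.evalCLM ℂ (M := Fin n → ℂ)
        (projIcc a b h t)).continuous.continuousAt).comp this).continuousWithinAt
    · intro ξ hξ
      have hξ' : ξ ∈ Ioo a b := ⟨ht.1.trans hξ.1, hξ.2⟩
      have := ((ContinuousMap.evalCLM ℂ (M := Fin n → ℂ)
        (projIcc a b h t)).restrictScalars ℝ).hasFDerivAt.comp_hasDerivAt ξ (hqd ξ hξ')
      have e2 := hRg ξ (Ioo_subset_Ioc_self hξ') (F' ξ) t ⟨ht.1.le, hξ.1.le⟩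
      rw [← e2]
      exact this
  -- extend by continuity
  have hcR : Continuous (fun t => g t b *ᵥ ((gs b b * g b b)⁻¹ *ᵥ D b)
        - ∫ ξ in t..b, g t ξ *ᵥ F' ξ) := by
    refine ((hgx b).matrix_mulVec continuous_const).sub ?_
    simp only [intervalIntegral.integral_symm b]
    refine Continuous.neg ?_
    have hG : Continuous (Function.uncurry fun t ξ => g t ξ *ᵥ F' ξ) :=
      hgcont.matrix_mulVec (hF'cont.comp continuous_snd)
    have := intervalIntegral.continuous_parametric_intervalIntegral_of_continuous (a₀ := b)
      (μ := MeasureTheory.volume) hG continuous_id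
    simp only [intervalIntegral.integral_symm _ b] at this ⊢
    exact this
  have hEq : EqOn φ (fun t => g t b *ᵥ ((gs b b * g b b)⁻¹ *ᵥ D b)
        - ∫ ξ in t..b, g t ξ *ᵥ F' ξ) (closure (Ioo a b)) :=
    EqOn.closure hmain hφcont hcR
  rw [closure_Ioo hab.ne] at hEq
  exact hEq
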